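/- arXiv:1402.2852 — 4 statements merged into one kernel-verified Lean document; each statement's English description precedes it below -/
import Mathlib

section
/- For every integer m×n matrix A, the Graver basis of A, i.e. the set of ⊑-minimal elements of {x ∈ ℤ^n : Ax = 0, x ≠ 0}, is a finite set. -/
/-- The conformal order on `ℤ^n`: `x ⊑ y` iff for every coordinate `i`,
`x i * y i ≥ 0` and `|x i| ≤ |y i|`. -/
def Conf {n : ℕ} (x y : Fin n → ℤ) : Prop :=
  ∀ i, 0 ≤ x i * y i ∧ |x i| ≤ |y i|

/-- The Graver basis of an integer `m × n` matrix `A`: the set of `⊑`-minimal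
elements of `{x ∈ ℤ^n : Ax = 0, x ≠ 0}`. -/
def GraverBasis {m n : ℕ} (A : Matrix (Fin m) (Fin n) ℤ) : Set (Fin n → ℤ) :=
  {x | (A.mulVec x = 0 ∧ x ≠ 0) ∧
    ∀ y, (A.mulVec y = 0 ∧ y ≠ 0) → Conf y x → y = x}

/-- The Graver basis of any integer matrix is a finite set. -/
theorem graverBasis_finite {m n : ℕ} (A : Matrix (Fin m) (Fin n) ℤ) :
    (GraverBasis A).Finite := by
  let f : (Fin n → ℤ) → (Fin n → ℕ × ℕ) := fun x i => ((x i).toNat, (-x i).toNat)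
  have hf : Function.Injective f := by
    intro x y h
    funext i
    have := congrFun h i
    simp only [f, Prod.mk.injEq] at this
    omega
  have hc : ∀ x y, f x ≤ f y → Conf x y := by
    intro x y h i
    have h1 : (x i).toNat ≤ (y i).toNat := (h i).1
    have h2 : (-x i).toNat ≤ (-y i).toNat := (h i).2
    refine ⟨?_, by rw [Int.abs_eq_natAbs, Int.abs_eq_natAbs]; omega⟩
    rcases le_total 0 (x i) with h0 | h0
    · rcases h0.eq_or_lt with h3 | h3
      · simp [← h3]
      · exact mul_nonneg h0 (by omega)
    · rcases h0.eq_or_lt with h3 | h3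
      · simp [h3]
      · exact mul_nonneg_of_nonpos_of_nonpos h0 (by omega)
  have hpwo : (Set.univ : Set (Fin n → ℕ × ℕ)).IsPWO :=
    Set.isPWO_of_wellQuasiOrderedLE _
  have ha : IsAntichain (· ≤ ·) (f '' GraverBasis A) := by
    rintro _ ⟨x, hx, rfl⟩ _ ⟨y, hy, rfl⟩ hne hle
    exact hne (congrArg f (hy.2 x hx.1 (hc x y hle)))
  exact (ha.finite_of_partiallyWellOrderedOn (hpwo.mono (Set.subset_univ _))).of_finite_image
    hf.injOn
end

section
/- Let a ∈ ℤ^n with a ≥ 0, let a_0 := Σ_{i=1}^n a_i, and define c¹, c² ∈ ℤ^{n+1} (coordinates indexed 0,…,n) by c¹ = (0, a_1, …, a_n) and c² = (a_0, −a_1, …, −a_n). Let X := {x ∈ ℤ^{n+1} : x_0 = 1 and x_i ∈ {0,1} for i = 1,…,n}. Then there exists x ∈ X with 2·max(c¹·x, c²·x) = a_0 if and only if there exists a subset I ⊆ {1,…,n} with Σ_{i∈I} a_i = Σ_{i∉I} a_i. -/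
/-- Subset-sum reduction for `min_X max_C` with a list `C`: there is a feasible
`x` whose worst-case cost doubled equals `a₀` iff the subset-sum instance `a`
admits a balanced partition. -/
theorem subset_sum_reduction_minmax (n : ℕ) (a : Fin n → ℤ) (ha : ∀ i, 0 ≤ a i) :
    (∃ x : Fin (n + 1) → ℤ, x 0 = 1 ∧
        (∀ i : Fin n, x i.succ = 0 ∨ x i.succ = 1) ∧
        2 * max (∑ i, (Fin.cons 0 a : Fin (n + 1) → ℤ) i * x i)
            (∑ i, (Fin.cons (∑ j, a j) (fun j => -a j) : Fin (n + 1) → ℤ) i * x i) =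
          (∑ j, a j)) ↔
      ∃ I : Finset (Fin n), ∑ i ∈ I, a i = ∑ i ∈ Iᶜ, a i := by
  constructor
  · rintro ⟨x, h0, hx, h⟩
    refine ⟨Finset.univ.filter (fun i => x i.succ = 1), ?_⟩
    have hc := Finset.sum_add_sum_compl (Finset.univ.filter (fun i : Fin n => x i.succ = 1)) a
    have hs : ∑ i ∈ Finset.univ.filter (fun i : Fin n => x i.succ = 1), a i
        = ∑ i, a i * x i.succ := by
      rw [Finset.sum_filter]
      refine Finset.sum_congr rfl fun i _ => ?_
      rcases hx i with h | h <;> simp [h]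
    simp only [Fin.sum_univ_succ, Fin.cons_zero, Fin.cons_succ, h0, neg_mul,
      Finset.sum_neg_distrib] at h
    rw [← hs] at h
    omega
  · rintro ⟨I, hI⟩
    refine ⟨Fin.cons 1 (fun i => if i ∈ I then 1 else 0), rfl, fun i => ?_, ?_⟩
    · simp only [Fin.cons_succ]
      split_ifs <;> simp
    · have hc := Finset.sum_add_sum_compl I a
      have hs : ∑ i, a i * (if i ∈ I then 1 else 0) = ∑ i ∈ I, a i := by simp
      simp only [Fin.sum_univ_succ, Fin.cons_zero, Fin.cons_succ, neg_mul,
        Finset.sum_neg_distrib]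
      rw [hs]
      omega
end

section
/- Let a ∈ ℤ^n with a ≥ 0, let a_0 := Σ_{i=1}^n a_i, let A be the (n+1)×(n+2) integer matrix whose first n+1 columns form the identity I_{n+1} and whose last column is (a_0, −2a_1, …, −2a_n)ᵀ, and let b := (0, −a_1, …, −a_n) ∈ ℤ^{n+1}. Then the set X := {x ∈ ℤ^{n+2} : Ax = b, −a_0 ≤ x_i ≤ a_0 for i = 0,…,n, 0 ≤ x_{n+1} ≤ 1} equals the two-element set {(0, −a_1, …, −a_n, 0), (−a_0, a_1, …, a_n, 1)}. -/
/-- The `(n+1) × (n+2)` matrix `A = (I_{n+1} | (a₀, -2a)ᵀ)`. -/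
def gadgetMatrix (n : ℕ) (a : Fin n → ℤ) : Matrix (Fin (n + 1)) (Fin (n + 2)) ℤ :=
  Matrix.of fun i =>
    Fin.snoc (fun j : Fin (n + 1) => if i = j then 1 else 0)
      ((Fin.cons (∑ k, a k) (fun k => -2 * a k) : Fin (n + 1) → ℤ) i)

theorem gadget_mulVec (n : ℕ) (a : Fin n → ℤ) (x : Fin (n + 2) → ℤ) (i : Fin (n + 1)) :
    (gadgetMatrix n a).mulVec x i = x i.castSucc +
      (Fin.cons (∑ k, a k) (fun k => -2 * a k) : Fin (n + 1) → ℤ) i * x (Fin.last (n + 1)) := by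
  simp [gadgetMatrix, Matrix.mulVec, dotProduct, Fin.sum_univ_castSucc (n := n + 1)]

/-- For `a ≥ 0`, `a₀ = ∑ aᵢ`, `b = (0, -a)`, the feasible set
`X = {x ∈ ℤ^{n+2} : Ax = b, -a₀ ≤ xᵢ ≤ a₀ (i = 0,…,n), 0 ≤ x_{n+1} ≤ 1}`
equals `{(0, -a, 0), (-a₀, a, 1)}`. -/
theorem gadget_feasible_set (n : ℕ) (a : Fin n → ℤ) (ha : ∀ i, 0 ≤ a i) :
    {x : Fin (n + 2) → ℤ |
        (gadgetMatrix n a).mulVec x = Fin.cons 0 (fun i => -a i) ∧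
        (∀ i : Fin (n + 1), -(∑ k, a k) ≤ x i.castSucc ∧ x i.castSucc ≤ ∑ k, a k) ∧
        0 ≤ x (Fin.last (n + 1)) ∧ x (Fin.last (n + 1)) ≤ 1} =
      {Fin.snoc (Fin.cons 0 (fun i => -a i)) 0,
        Fin.snoc (Fin.cons (-(∑ k, a k)) a) 1} := by
  have hs : ∀ k, a k ≤ ∑ k, a k := fun k =>
    Finset.single_le_sum (fun i _ => ha i) (Finset.mem_univ k)
  have h0 : 0 ≤ ∑ k, a k := Finset.sum_nonneg fun i _ => ha i
  ext x
  simp only [Set.mem_setOf_eq, Set.mem_insert_iff, Set.mem_singleton_iff]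
  constructor
  · rintro ⟨hA, -, h1, h2⟩
    have hz := congrFun hA 0
    have hk := fun k : Fin n => congrFun hA k.succ
    simp only [gadget_mulVec, Fin.cons_zero, Fin.cons_succ] at hz hk
    have ht : x (Fin.last (n + 1)) = 0 ∨ x (Fin.last (n + 1)) = 1 := by omega
    rcases ht with ht | ht
    · left
      rw [ht] at hz hk
      funext j
      refine Fin.lastCases ?_ (fun j => ?_) j
      · rw [Fin.snoc_last, ht]
      · rw [Fin.snoc_castSucc]
        refine Fin.cases ?_ (fun k => ?_) j
        · rw [Fin.cons_zero]; linarith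
        · rw [Fin.cons_succ]; linarith [hk k]
    · right
      rw [ht] at hz hk
      funext j
      refine Fin.lastCases ?_ (fun j => ?_) j
      · rw [Fin.snoc_last, ht]
      · rw [Fin.snoc_castSucc]
        refine Fin.cases ?_ (fun k => ?_) j
        · rw [Fin.cons_zero]; linarith
        · rw [Fin.cons_succ]; linarith [hk k]
  · rintro (rfl | rfl)
    · refine ⟨?_, ?_, ?_, ?_⟩
      · funext j
        rw [gadget_mulVec, Fin.snoc_last, Fin.snoc_castSucc]
        simp
      · intro i
        rw [Fin.snoc_castSucc]
        refine Fin.cases ?_ (fun k => ?_) i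
        · rw [Fin.cons_zero]; constructor <;> linarith
        · rw [Fin.cons_succ]; constructor <;> linarith [hs k, ha k]
      · rw [Fin.snoc_last]
      · rw [Fin.snoc_last]; norm_num
    · refine ⟨?_, ?_, ?_, ?_⟩
      · funext j
        rw [gadget_mulVec, Fin.snoc_last, Fin.snoc_castSucc]
        refine Fin.cases ?_ (fun k => ?_) j
        · simp only [Fin.cons_zero]; ring
        · simp only [Fin.cons_succ]; ring
      · intro i
        rw [Fin.snoc_castSucc]
        refine Fin.cases ?_ (fun k => ?_) i
        · rw [Fin.cons_zero]; constructor <;> linarith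
        · rw [Fin.cons_succ]; constructor <;> linarith [hs k, ha k]
      · rw [Fin.snoc_last]; norm_num
      · rw [Fin.snoc_last]
end

section
/- Let a ∈ ℤ^n with a ≥ 0, let a_0 := Σ_{i=1}^n a_i, let X := {(0, −a_1, …, −a_n, 0), (−a_0, a_1, …, a_n, 1)} ⊂ ℤ^{n+2}, and let C := {c ∈ ℤ^{n+2} : c_0 = 1, c_i ∈ {0,1} for i = 1,…,n, c_{n+1} = 0}. Then there exists c ∈ C with 2·min_{x∈X} c·x = −a_0 if and only if there exists a subset I ⊆ {1,…,n} with Σ_{i∈I} a_i = Σ_{i∉I} a_i. -/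
theorem dot_aux (n : ℕ) (c : Fin (n + 2) → ℤ) (u v : ℤ) (f : Fin n → ℤ) :
    ∑ i, c i * (Fin.snoc (Fin.cons u f) v : Fin (n + 2) → ℤ) i =
      c 0 * u + ∑ i : Fin n, c i.succ.castSucc * f i + c (Fin.last (n + 1)) * v := by
  rw [Fin.sum_univ_castSucc, Fin.sum_univ_succ]
  simp only [Fin.snoc_castSucc, Fin.snoc_last, Fin.cons_zero, Fin.cons_succ]
  rfl

/-- Subset-sum reduction for `max_C min_X` with a box `C`: there is a cost
vector `c ∈ C` whose best-response value doubled equals `-a₀` iff the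
subset-sum instance `a` admits a balanced partition. -/
theorem subset_sum_reduction_maxmin (n : ℕ) (a : Fin n → ℤ) (ha : ∀ i, 0 ≤ a i) :
    (∃ c : Fin (n + 2) → ℤ, c 0 = 1 ∧
        (∀ i : Fin n, c i.succ.castSucc = 0 ∨ c i.succ.castSucc = 1) ∧
        c (Fin.last (n + 1)) = 0 ∧
        2 * min (∑ i, c i * (Fin.snoc (Fin.cons 0 (fun j => -a j)) 0 : Fin (n + 2) → ℤ) i)
            (∑ i, c i * (Fin.snoc (Fin.cons (-(∑ j, a j)) a) 1 : Fin (n + 2) → ℤ) i) =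
          -(∑ j, a j)) ↔
      ∃ I : Finset (Fin n), ∑ i ∈ I, a i = ∑ i ∈ Iᶜ, a i := by
  simp only [dot_aux]
  constructor
  · rintro ⟨c, h0, h1, h2, h3⟩
    refine ⟨Finset.univ.filter (fun i => c i.succ.castSucc = 1), ?_⟩
    have hS : ∑ i : Fin n, c i.succ.castSucc * a i =
        ∑ i ∈ Finset.univ.filter (fun i : Fin n => c i.succ.castSucc = 1), a i := by
      rw [Finset.sum_filter]
      refine Finset.sum_congr rfl fun i _ => ?_
      rcases h1 i with h | h <;> rw [h] <;> simp
    have hA := Finset.sum_add_sum_compl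
      (Finset.univ.filter (fun i : Fin n => c i.succ.castSucc = 1)) a
    simp only [h0, h2, mul_neg, Finset.sum_neg_distrib, hS] at h3
    omega
  · rintro ⟨I, hI⟩
    have hA := Finset.sum_add_sum_compl I a
    refine ⟨Fin.snoc (Fin.cons 1 (fun j => if j ∈ I then 1 else 0)) 0, ?_, ?_, ?_, ?_⟩
    · rw [← Fin.castSucc_zero, Fin.snoc_castSucc, Fin.cons_zero]
    · intro i
      rw [Fin.snoc_castSucc, Fin.cons_succ]
      split_ifs <;> simp
    · rw [Fin.snoc_last]
    · have h0 : (Fin.snoc (Fin.cons 1 (fun j => if j ∈ I then 1 else 0)) 0 :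
          Fin (n + 2) → ℤ) 0 = 1 := by
        rw [← Fin.castSucc_zero, Fin.snoc_castSucc, Fin.cons_zero]
      have hS : ∑ i : Fin n, (if i ∈ I then (1 : ℤ) else 0) * a i = ∑ i ∈ I, a i := by
        simp
      simp only [h0, Fin.snoc_castSucc, Fin.cons_succ, Fin.snoc_last, mul_neg,
        Finset.sum_neg_distrib, hS]
      omega
end
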